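/- Let S be a real symmetric positive definite (p+q)×(p+q) sample covariance matrix partitioned into blocks S_XX, S_XY, S_YY. Then the indirect estimator formed from the sample plug-ins, namely Δ̂⁻¹ η̂ᵀ (S_YY⁻¹ + η̂ Δ̂⁻¹ η̂ᵀ)⁻¹ with η̂ = S_YY⁻¹ S_XYᵀ and Δ̂ = S_XX − S_XY S_YY⁻¹ S_XYᵀ, equals the ordinary least squares coefficient matrix S_XX⁻¹ S_XY. -/

import Mathlib

open Matrix

/-!
Put `Δ = A - B D⁻¹ Bᵀ` and `W = D - Bᵀ A⁻¹ B`, the two Schur complements of `S`. Positive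
definiteness of `S` makes `A`, `D` and `Δ` invertible. The push-through identity
`Δ A⁻¹ B = B D⁻¹ W` gives `Δ⁻¹ B D⁻¹ W = A⁻¹ B`, and hence
`(D⁻¹ + D⁻¹ Bᵀ Δ⁻¹ B D⁻¹) W = D⁻¹ (W + Bᵀ A⁻¹ B) = 1`. So the inverse factor in the indirect
estimator is `W`, and the estimator itself is `Δ⁻¹ B D⁻¹ W = A⁻¹ B`.
-/

/-- If the plug-in quantities are the blocks of a single symmetric positive definite sample
covariance matrix `S = [[A, B], [Bᵀ, D]]`, then the indirect estimator
`Δ̂⁻¹ η̂ᵀ (D⁻¹ + η̂ Δ̂⁻¹ η̂ᵀ)⁻¹`, with `η̂ = D⁻¹ Bᵀ` and `Δ̂ = A - B D⁻¹ Bᵀ`,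
equals the ordinary least squares estimator `A⁻¹ B`. -/
theorem indirect_estimator_eq_ols (p q : ℕ)
    (A : Matrix (Fin p) (Fin p) ℝ) (B : Matrix (Fin p) (Fin q) ℝ)
    (D : Matrix (Fin q) (Fin q) ℝ)
    (hS : (Matrix.fromBlocks A B Bᵀ D).PosDef) :
    (A - B * D⁻¹ * Bᵀ)⁻¹ * (D⁻¹ * Bᵀ)ᵀ *
        (D⁻¹ + (D⁻¹ * Bᵀ) * (A - B * D⁻¹ * Bᵀ)⁻¹ * (D⁻¹ * Bᵀ)ᵀ)⁻¹ =
      A⁻¹ * B := by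
  have hA : A.PosDef := hS.submatrix (e := Sum.inl) Sum.inl_injective
  have hD : D.PosDef := hS.submatrix (e := Sum.inr) Sum.inr_injective
  have hAu : IsUnit A.det := (isUnit_iff_isUnit_det A).1 hA.isUnit
  have hDu : IsUnit D.det := (isUnit_iff_isUnit_det D).1 hD.isUnit
  have hΔu : IsUnit (A - B * D⁻¹ * Bᵀ).det := by
    letI := D.invertibleOfIsUnitDet hDu
    rw [← isUnit_iff_isUnit_det, ← invOf_eq_nonsing_inv]
    exact isUnit_fromBlocks_iff_of_invertible₂₂.1 hS.isUnit
  have hη : (D⁻¹ * Bᵀ)ᵀ = B * D⁻¹ := by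
    have hDt : Dᵀ = D := by simpa using hD.isHermitian.eq
    rw [transpose_mul, transpose_transpose, transpose_nonsing_inv, hDt]
  have hpush : (A - B * D⁻¹ * Bᵀ) * (A⁻¹ * B) = B * D⁻¹ * (D - Bᵀ * A⁻¹ * B) := by
    rw [Matrix.sub_mul, Matrix.mul_sub, mul_nonsing_inv_cancel_left _ _ hAu,
      nonsing_inv_mul_cancel_right _ _ hDu]
    simp only [Matrix.mul_assoc]
  have hols : (A - B * D⁻¹ * Bᵀ)⁻¹ * (B * D⁻¹) * (D - Bᵀ * A⁻¹ * B) = A⁻¹ * B := by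
    rw [Matrix.mul_assoc, ← hpush, nonsing_inv_mul_cancel_left _ _ hΔu]
  rw [hη]
  have hinv : (D⁻¹ + (D⁻¹ * Bᵀ) * (A - B * D⁻¹ * Bᵀ)⁻¹ * (B * D⁻¹))⁻¹ =
      D - Bᵀ * A⁻¹ * B := by
    apply inv_eq_right_inv
    rw [Matrix.add_mul, Matrix.mul_assoc (D⁻¹ * Bᵀ), Matrix.mul_assoc (D⁻¹ * Bᵀ), hols,
      Matrix.mul_assoc D⁻¹, ← Matrix.mul_add, ← Matrix.mul_assoc Bᵀ, sub_add_cancel,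
      nonsing_inv_mul _ hDu]
  rw [hinv, hols]
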